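/- arXiv:1509.06690 — 3 statements merged into one kernel-verified Lean document; each statement's English description precedes it below -/
import Mathlib

section
/- Let w : ℝ → ℝ³ be a twice continuously differentiable curve such that det[w(t), w'(t), w''(t)] = 0 for all t and the cross product w(t) × w'(t) is nonzero for all t. Then the curve lies in the plane through the origin spanned by its initial position and velocity: w(t) ∈ span{w(0), w'(0)} for all t ∈ ℝ. -/
/-!
Encode a moving frame `v₁, …, vₖ` in `E` as the injective operator `T t : 𝕜ᵏ → E` sending the
standard basis to the frame. If each derivative `vᵢ'` stays in the span of the frame, then
`T' = T ∘ A` for some matrix-valued function `A`, about which nothing else is known: it may fail to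
be continuous, so uniqueness for linear differential equations does not apply. Instead, choose a
left inverse `L` of `T s`. Then `M = L ∘ T` satisfies `M' = M A` and is invertible near `s`, and

  `(T M⁻¹)' = T A M⁻¹ - T M⁻¹ (M A) M⁻¹ = 0`.

Hence `T = T s ∘ M` near `s`, so the range of `T` is locally constant, and therefore constant.
For a totally degenerate curve `w`, the frame is `w, w'`: degeneracy says exactly that `w''` lies in
its span.
-/

open Topology

section Operator

variable {𝕜 : Type*} [NontriviallyNormedField 𝕜]
  {V : Type*} [NormedAddCommGroup V] [NormedSpace 𝕜 V]
  {E : Type*} [NormedAddCommGroup E] [NormedSpace 𝕜 E]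

lemma range_comp_of_isUnit (T : V →L[𝕜] E) {M : V →L[𝕜] V} (hM : IsUnit M) :
    (T ∘L M).range = T.range := by
  obtain ⟨u, rfl⟩ := hM
  exact LinearMap.range_comp_of_range_eq_top _ <| LinearMap.range_eq_top.mpr fun x ↦
    ⟨(↑u⁻¹ : V →L[𝕜] V) x, congr($(u.mul_inv) x)⟩

lemma hasDerivAt_zero_comp_ringInverse [CompleteSpace V] {T : 𝕜 → V →L[𝕜] E} {M : 𝕜 → V →L[𝕜] V}
    {A : V →L[𝕜] V} {t : 𝕜} (hT : HasDerivAt T (T t ∘L A) t) (hM : HasDerivAt M (M t ∘L A) t)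
    (hu : IsUnit (M t)) : HasDerivAt (fun r ↦ T r ∘L Ring.inverse (M r)) 0 t := by
  obtain ⟨u, hu⟩ := hu
  have hinv : HasDerivAt (fun r ↦ Ring.inverse (M r)) (-(A * ↑u⁻¹)) t := by
    have hR := hasFDerivAt_ringInverse (𝕜 := 𝕜) u
    rw [hu] at hR
    refine (hR.comp_hasDerivAt t hM).congr_deriv ?_
    change -((↑u⁻¹ : V →L[𝕜] V) * (M t * A) * ↑u⁻¹) = _
    rw [← hu, u.inv_mul_cancel_left]
  refine (hT.clm_comp hinv).congr_deriv ?_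
  rw [← hu, Ring.inverse_unit]
  ext x
  simp

end Operator

section ConstantRange

variable {𝕜 : Type*} [RCLike 𝕜]
  {V : Type*} [NormedAddCommGroup V] [NormedSpace 𝕜 V]
  {E : Type*} [NormedAddCommGroup E] [NormedSpace 𝕜 E]

lemma hasLeftInverse_of_injective [FiniteDimensional 𝕜 V]
    {T : V →L[𝕜] E} (hT : Function.Injective T) : T.HasLeftInverse := by
  obtain ⟨g, hg⟩ := T.toLinearMap.exists_leftInverse_of_injective (LinearMap.ker_eq_bot.mpr hT)
  obtain ⟨L, hL⟩ := (g.domRestrict T.range).toContinuousLinearMap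
    |>.exist_extension_of_finiteDimensional_range
  refine ⟨L, fun x ↦ ?_⟩
  calc L (T x) = g (T x) := congr($hL ⟨T x, x, rfl⟩).symm
    _ = x := congr($hg x)

variable [CompleteSpace V]

lemma eventually_range_eq_of_hasDerivAt_comp {T : 𝕜 → V →L[𝕜] E} {A : 𝕜 → V →L[𝕜] V}
    (hT : ∀ t, HasDerivAt T (T t ∘L A t) t) {s : 𝕜} (hs : (T s).HasLeftInverse) :
    ∀ᶠ t in 𝓝 s, (T t).range = (T s).range := by
  obtain ⟨L, hL⟩ := hs
  set M : 𝕜 → V →L[𝕜] V := fun t ↦ L ∘L T t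
  have hM (t : 𝕜) : HasDerivAt M (M t ∘L A t) t :=
    ((hasDerivAt_const t L).clm_comp (hT t)).congr_deriv (by ext; simp [M])
  have hMs : M s = 1 := ContinuousLinearMap.ext hL
  set U : Set 𝕜 := {t | IsUnit (M t)}
  have hU : IsOpen U :=
    Units.isOpen.preimage (continuous_iff_continuousAt.mpr fun t ↦ (hM t).continuousAt)
  have hsU : s ∈ U := by simp [U, hMs]
  set G : 𝕜 → V →L[𝕜] E := fun t ↦ T t ∘L Ring.inverse (M t)
  have hG : ∀ t ∈ U, HasDerivAt G 0 t := fun t ht ↦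
    hasDerivAt_zero_comp_ringInverse (hT t) (hM t) ht
  have hopen : IsOpen (U ∩ G ⁻¹' {G s}) := hU.isOpen_inter_preimage_of_deriv_eq_zero
    (fun t ht ↦ (hG t ht).differentiableAt.differentiableWithinAt) (fun t ht ↦ (hG t ht).deriv) _
  filter_upwards [hopen.mem_nhds ⟨hsU, rfl⟩] with t ⟨htU, htG⟩
  calc (T t).range = (G t).range := (range_comp_of_isUnit _ htU.ringInverse).symm
    _ = (G s).range := congr(($htG).range)
    _ = (T s).range := range_comp_of_isUnit _ hsU.ringInverse

lemma range_eq_of_hasDerivAt_comp {T : 𝕜 → V →L[𝕜] E} {A : 𝕜 → V →L[𝕜] V}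
    (hT : ∀ t, HasDerivAt T (T t ∘L A t) t) (hinv : ∀ t, (T t).HasLeftInverse) (s t : 𝕜) :
    (T s).range = (T t).range :=
  IsLocallyConstant.apply_eq_of_preconnectedSpace (f := fun t ↦ (T t).range)
    ((IsLocallyConstant.iff_eventually_eq _).mpr fun r ↦
      eventually_range_eq_of_hasDerivAt_comp hT (hinv r)) s t

end ConstantRange

section Frame

variable {𝕜 : Type*} [NontriviallyNormedField 𝕜]
  {E : Type*} [NormedAddCommGroup E] [NormedSpace 𝕜 E]
  {ι : Type*} [Fintype ι]

variable (𝕜) in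
/-- The operator `c ↦ ∑ i, c i • v i` encoding a finite family `v` of vectors: a continuous version
of `Fintype.linearCombination`, written as a sum so that it can be differentiated in `v`. -/
noncomputable def frameOperator (v : ι → E) : (ι → 𝕜) →L[𝕜] E :=
  ∑ i, (ContinuousLinearMap.proj i : (ι → 𝕜) →L[𝕜] 𝕜).smulRight (v i)

lemma frameOperator_apply (v : ι → E) (c : ι → 𝕜) : frameOperator 𝕜 v c = ∑ i, c i • v i := by
  simp [frameOperator]

lemma toLinearMap_frameOperator (v : ι → E) :
    (frameOperator 𝕜 v).toLinearMap = Fintype.linearCombination 𝕜 v :=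
  LinearMap.ext (frameOperator_apply v)

lemma range_frameOperator (v : ι → E) :
    (frameOperator 𝕜 v).range = Submodule.span 𝕜 (Set.range v) := by
  rw [toLinearMap_frameOperator, Fintype.range_linearCombination]

lemma exists_frameOperator_eq_comp {v v' : ι → E}
    (h : ∀ i, v' i ∈ Submodule.span 𝕜 (Set.range v)) :
    ∃ A : (ι → 𝕜) →L[𝕜] (ι → 𝕜), frameOperator 𝕜 v' = frameOperator 𝕜 v ∘L A := by
  simp only [← range_frameOperator, LinearMap.mem_range, ContinuousLinearMap.coe_coe] at h
  choose c hc using h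
  refine ⟨frameOperator 𝕜 c, ContinuousLinearMap.ext fun x ↦ ?_⟩
  simp only [frameOperator_apply _ x, ContinuousLinearMap.comp_apply, map_sum, map_smul, hc]

lemma hasDerivAt_frameOperator {v : 𝕜 → ι → E} {v' : ι → E} {t : 𝕜}
    (hv : ∀ i, HasDerivAt (fun r ↦ v r i) (v' i) t) :
    HasDerivAt (fun r ↦ frameOperator 𝕜 (v r)) (frameOperator 𝕜 v') t :=
  HasDerivAt.fun_sum fun i _ ↦
    (ContinuousLinearMap.smulRightL 𝕜 (ι → 𝕜) E (.proj i)).hasFDerivAt.comp_hasDerivAt t (hv i)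

end Frame

section Curve

variable {𝕜 : Type*} [RCLike 𝕜] {E : Type*} [NormedAddCommGroup E] [NormedSpace 𝕜 E]

lemma hasLeftInverse_frameOperator {ι : Type*} [Fintype ι] {v : ι → E}
    (hv : LinearIndependent 𝕜 v) : (frameOperator 𝕜 v).HasLeftInverse := by
  rw [linearIndependent_iff_injective_fintypeLinearCombination, ← toLinearMap_frameOperator] at hv
  exact hasLeftInverse_of_injective hv

theorem span_range_eq_of_hasDerivAt_mem_span {ι : Type*} [Finite ι] {v v' : 𝕜 → ι → E}
    (hv : ∀ t i, HasDerivAt (fun r ↦ v r i) (v' t i) t)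
    (hmem : ∀ t i, v' t i ∈ Submodule.span 𝕜 (Set.range (v t)))
    (hindep : ∀ t, LinearIndependent 𝕜 (v t)) (s t : 𝕜) :
    Submodule.span 𝕜 (Set.range (v s)) = Submodule.span 𝕜 (Set.range (v t)) := by
  have := Fintype.ofFinite ι
  choose A hA using fun t ↦ exists_frameOperator_eq_comp (hmem t)
  have hT (t : 𝕜) : HasDerivAt (fun r ↦ frameOperator 𝕜 (v r))
      (frameOperator 𝕜 (v t) ∘L A t) t := hA t ▸ hasDerivAt_frameOperator (hv t)
  simpa only [range_frameOperator] using
    range_eq_of_hasDerivAt_comp hT (fun t ↦ hasLeftInverse_frameOperator (hindep t)) s t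

variable {w : 𝕜 → E}

theorem span_iteratedDeriv_eq_of_not_linearIndependent {k : ℕ}
    (hw : ∀ i < k, Differentiable 𝕜 (iteratedDeriv i w))
    (hdeg : ∀ t, ¬ LinearIndependent 𝕜 fun i : Fin (k + 1) ↦ iteratedDeriv i w t)
    (hindep : ∀ t, LinearIndependent 𝕜 fun i : Fin k ↦ iteratedDeriv i w t) (s t : 𝕜) :
    Submodule.span 𝕜 (Set.range fun i : Fin k ↦ iteratedDeriv i w s) =
      Submodule.span 𝕜 (Set.range fun i : Fin k ↦ iteratedDeriv i w t) := by
  have hderiv (t : 𝕜) (i : Fin k) :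
      HasDerivAt (iteratedDeriv i w) (iteratedDeriv (i + 1) w t) t := by
    rw [iteratedDeriv_succ]
    exact (hw i i.isLt t).hasDerivAt
  have htop (t : 𝕜) : iteratedDeriv k w t ∈
      Submodule.span 𝕜 (Set.range fun i : Fin k ↦ iteratedDeriv i w t) := by
    by_contra hnot
    exact hdeg t (linearIndependent_finSucc'.mpr ⟨hindep t, hnot⟩)
  refine span_range_eq_of_hasDerivAt_mem_span hderiv (fun t i ↦ ?_) hindep s t
  rcases Nat.lt_or_eq_of_le (show (i : ℕ) + 1 ≤ k from i.isLt) with hlt | hlast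
  · exact Submodule.subset_span ⟨⟨i + 1, hlt⟩, rfl⟩
  · simpa only [hlast] using htop t

theorem totally_degenerate_curve_planar_general
    (hw : Differentiable 𝕜 w) (hw' : Differentiable 𝕜 (deriv w))
    (hdeg : ∀ t, ¬ LinearIndependent 𝕜 ![w t, deriv w t, iteratedDeriv 2 w t])
    (hindep : ∀ t, LinearIndependent 𝕜 ![w t, deriv w t]) (s t : 𝕜) :
    w t ∈ Submodule.span 𝕜 {w s, deriv w s} := by
  have hpair (t : 𝕜) : ![w t, deriv w t] = fun i : Fin 2 ↦ iteratedDeriv i w t := by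
    ext i; fin_cases i <;> simp
  have htriple (t : 𝕜) : ![w t, deriv w t, iteratedDeriv 2 w t] =
      fun i : Fin 3 ↦ iteratedDeriv i w t := by
    ext i; fin_cases i <;> simp
  simp only [hpair] at hindep
  simp only [htriple] at hdeg
  have hdiff : ∀ i < 2, Differentiable 𝕜 (iteratedDeriv i w) := by
    intro i hi
    interval_cases i <;> simpa
  have hspan := span_iteratedDeriv_eq_of_not_linearIndependent hdiff hdeg hindep t s
  simp only [← hpair, Matrix.range_cons, Matrix.range_empty, Set.union_empty,
    Set.singleton_union] at hspan
  exact hspan ▸ Submodule.mem_span_of_mem (Set.mem_insert _ _)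

end Curve

lemma not_linearIndependent_row_of_det_eq_zero {K n : Type*} [Field K] [Fintype n] [DecidableEq n]
    {A : Matrix n n K} (hA : A.det = 0) : ¬ LinearIndependent K A.row := by
  rw [Matrix.linearIndependent_rows_iff_isUnit, Matrix.isUnit_iff_isUnit_det, hA]
  exact not_isUnit_zero

/-- A totally degenerate curve lies in the plane through the origin spanned by
its initial position and velocity: if `w : ℝ → ℝ³` is `C²`, `det[w, w', w''] ≡ 0`,
and `w × w'` never vanishes, then `w(t) ∈ span{w(0), w'(0)}` for all `t`. -/
theorem totally_degenerate_curve_planar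
    (w : ℝ → (Fin 3 → ℝ)) (hw : ContDiff ℝ 2 w)
    (hdeg : ∀ t : ℝ,
      Matrix.det (Matrix.of ![w t, deriv w t, iteratedDeriv 2 w t]) = 0)
    (hcross : ∀ t : ℝ, crossProduct (w t) (deriv w t) ≠ 0) :
    ∀ t : ℝ, w t ∈ Submodule.span ℝ ({w 0, deriv w 0} : Set (Fin 3 → ℝ)) :=
  totally_degenerate_curve_planar_general (hw.differentiable two_ne_zero)
    hw.differentiable_deriv_two (fun t ↦ not_linearIndependent_row_of_det_eq_zero (hdeg t))
    (fun t ↦ crossProduct_ne_zero_iff_linearIndependent.mp (hcross t)) 0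
end

section
/- Let y, z : ℝ → ℝ be twice continuously differentiable, and fix x ∈ ℝ such that z(x) ≠ 0 and z(x) − x·z'(x) ≠ 0. Define the projected plane curve coordinates X(x) = x/z(x) and Y(x) = y(x)/z(x), and let Δ(x) = det[(x, y(x), z(x)), (1, y'(x), z'(x)), (0, y''(x), z''(x))]. Then the second derivative of the projected curve satisfies (1/X'(x)) · d/dx ( Y'(x)/X'(x) ) = − z(x)³ · Δ(x) / (x·z'(x) − z(x))³. -/
/-!
The slope of the projected curve is a ratio of Wronskians: writing `W(f, g) = f g' - f' g`, the
quotient rule gives `(f / g)' = -W(f, g) / g²`, so for a curve `(a, b, c)` the slope `Y' / X'` is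
`W(b, c) / W(a, c)`. Since `W(f, g)' = f g'' - f'' g`, the numerator of the derivative of this ratio
involves only 2 × 2 minors of the matrix with rows `w, w', w''`, and it equals `c` times its
determinant.
-/

open Filter Topology

theorem minors_mul_sub_minors_mul_eq_mul_det {R : Type*} [CommRing R]
    (a b c a' b' c' a'' b'' c'' : R) :
    (b * c'' - b'' * c) * (a * c' - a' * c) - (b * c' - b' * c) * (a * c'' - a'' * c) =
      c * Matrix.det !![a, b, c; a', b', c'; a'', b'', c''] := by
  rw [Matrix.det_fin_three]
  simp only [Matrix.of_apply, Matrix.cons_val]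
  ring

section Calculus

variable {𝕜 : Type*} [NontriviallyNormedField 𝕜] {x : 𝕜}

section NormedSpace

variable {F : Type*} [NormedAddCommGroup F] [NormedSpace 𝕜 F] {f : 𝕜 → F}

theorem eventually_hasDerivAt_deriv {n : ℕ} (hf : ContDiffAt 𝕜 n f x) (hn : n ≠ 0) :
    ∀ᶠ t in 𝓝 x, HasDerivAt f (deriv f t) t := by
  filter_upwards [hf.eventually (by simp)] with t ht
  exact (ht.differentiableAt (mod_cast hn)).hasDerivAt

theorem hasDerivAt_deriv_iteratedDeriv_two (hf : DifferentiableAt 𝕜 (deriv f) x) :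
    HasDerivAt (deriv f) (iteratedDeriv 2 f x) x := by
  rw [iteratedDeriv_succ, iteratedDeriv_one]
  exact hf.hasDerivAt

end NormedSpace

theorem hasDerivAt_wronskian {A : Type*} [NormedCommRing A] [NormedAlgebra 𝕜 A]
    {f f' g g' : 𝕜 → A} {f'' g'' : A}
    (hf : HasDerivAt f (f' x) x) (hf' : HasDerivAt f' f'' x)
    (hg : HasDerivAt g (g' x) x) (hg' : HasDerivAt g' g'' x) :
    HasDerivAt (fun t => f t * g' t - f' t * g t) (f x * g'' - f'' * g x) x :=
  ((hf.fun_mul hg').fun_sub (hf'.fun_mul hg)).congr_deriv (by ring)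

variable {𝕜' : Type*} [NontriviallyNormedField 𝕜'] [NormedAlgebra 𝕜 𝕜']

theorem deriv_div_eq_neg_wronskian_div_sq {f g : 𝕜 → 𝕜'} {f' g' : 𝕜'}
    (hf : HasDerivAt f f' x) (hg : HasDerivAt g g' x) (hx : g x ≠ 0) :
    deriv (fun t => f t / g t) x = -(f x * g' - f' * g x) / g x ^ 2 := by
  rw [(hf.fun_div hg hx).deriv, neg_sub]

variable {a b c a' b' c' : 𝕜 → 𝕜'} {a'' b'' c'' : 𝕜'}

theorem deriv_div_div_deriv_div_eq_wronskian_div_wronskian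
    (ha : HasDerivAt a (a' x) x) (hb : HasDerivAt b (b' x) x) (hc : HasDerivAt c (c' x) x)
    (hx : c x ≠ 0) :
    deriv (fun s => b s / c s) x / deriv (fun s => a s / c s) x =
      (b x * c' x - b' x * c x) / (a x * c' x - a' x * c x) := by
  rw [deriv_div_eq_neg_wronskian_div_sq hb hc hx, deriv_div_eq_neg_wronskian_div_sq ha hc hx,
    div_div_div_cancel_right₀ (pow_ne_zero 2 hx), neg_div_neg_eq]

theorem hasDerivAt_projected_slope
    (ha : ∀ᶠ t in 𝓝 x, HasDerivAt a (a' t) t) (ha' : HasDerivAt a' a'' x)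
    (hb : ∀ᶠ t in 𝓝 x, HasDerivAt b (b' t) t) (hb' : HasDerivAt b' b'' x)
    (hc : ∀ᶠ t in 𝓝 x, HasDerivAt c (c' t) t) (hc' : HasDerivAt c' c'' x)
    (hx : c x ≠ 0) (hW : a x * c' x - a' x * c x ≠ 0) :
    HasDerivAt (fun t => deriv (fun s => b s / c s) t / deriv (fun s => a s / c s) t)
      (c x * Matrix.det !![a x, b x, c x; a' x, b' x, c' x; a'', b'', c''] /
        (a x * c' x - a' x * c x) ^ 2) x := by
  have slope_eq : (fun t => deriv (fun s => b s / c s) t / deriv (fun s => a s / c s) t) =ᶠ[𝓝 x]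
      fun t => (b t * c' t - b' t * c t) / (a t * c' t - a' t * c t) := by
    filter_upwards [ha, hb, hc, hc.self_of_nhds.continuousAt.eventually_ne hx] with t hat hbt hct ht
    exact deriv_div_div_deriv_div_eq_wronskian_div_wronskian hat hbt hct ht
  have hWac := hasDerivAt_wronskian ha.self_of_nhds ha' hc.self_of_nhds hc'
  have hWbc := hasDerivAt_wronskian hb.self_of_nhds hb' hc.self_of_nhds hc'
  rw [← minors_mul_sub_minors_mul_eq_mul_det]
  exact (hWbc.fun_div hWac hW).congr_of_eventuallyEq slope_eq

theorem projected_second_derivative_general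
    (ha : ∀ᶠ t in 𝓝 x, HasDerivAt a (a' t) t) (ha' : HasDerivAt a' a'' x)
    (hb : ∀ᶠ t in 𝓝 x, HasDerivAt b (b' t) t) (hb' : HasDerivAt b' b'' x)
    (hc : ∀ᶠ t in 𝓝 x, HasDerivAt c (c' t) t) (hc' : HasDerivAt c' c'' x)
    (hx : c x ≠ 0) (hW : a x * c' x - a' x * c x ≠ 0) :
    (1 / deriv (fun t => a t / c t) x) *
        deriv (fun t => deriv (fun s => b s / c s) t / deriv (fun s => a s / c s) t) x =
      -c x ^ 3 * Matrix.det !![a x, b x, c x; a' x, b' x, c' x; a'', b'', c''] /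
        (a x * c' x - a' x * c x) ^ 3 := by
  rw [(hasDerivAt_projected_slope ha ha' hb hb' hc hc' hx hW).deriv,
    deriv_div_eq_neg_wronskian_div_sq ha.self_of_nhds hc.self_of_nhds hx]
  field_simp

end Calculus

/-- For a space curve `(x, y(x), z(x))` with `z(x) ≠ 0` and `z(x) − x z'(x) ≠ 0`,
the second derivative `Y₂ = (1/X') d/dx (Y'/X')` of its central projection
`(X, Y) = (x/z, y/z)` is given by `−z³ Δ / (x z' − z)³`, where
`Δ = det[(x, y, z), (1, y', z'), (0, y'', z'')]`. -/
theorem projected_second_derivative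
    (y z : ℝ → ℝ) (hy : ContDiff ℝ 2 y) (hz : ContDiff ℝ 2 z)
    (x : ℝ) (h1 : z x ≠ 0) (h2 : z x - x * deriv z x ≠ 0) :
    (1 / deriv (fun t => t / z t) x) *
        deriv (fun t => deriv (fun s => y s / z s) t / deriv (fun s => s / z s) t) x
      = - (z x) ^ 3 *
          Matrix.det !![x, y x, z x; 1, deriv y x, deriv z x;
            0, iteratedDeriv 2 y x, iteratedDeriv 2 z x] /
          (x * deriv z x - z x) ^ 3 := by
  have hW : x * deriv z x - 1 * z x ≠ 0 := by rwa [one_mul, ← neg_sub, neg_ne_zero]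
  simpa only [one_mul] using projected_second_derivative_general
    (.of_forall hasDerivAt_id') (hasDerivAt_const x 1)
    (eventually_hasDerivAt_deriv hy.contDiffAt two_ne_zero)
    (hasDerivAt_deriv_iteratedDeriv_two (hy.differentiable_deriv_two x))
    (eventually_hasDerivAt_deriv hz.contDiffAt two_ne_zero)
    (hasDerivAt_deriv_iteratedDeriv_two (hz.differentiable_deriv_two x)) h1 hW
end

section
/- Consider the twisted cubic w(t) = (t, t², t³) for t > 0. Let Δ(t) = det[w(t), w'(t), w''(t)], and define the centro-equi-affine curvature κ(t) = −(1/2)·(d²/dt²)(Δ(t)^{−2/3}) + det[w(t), w''(t), w'''(t)]/Δ(t)^{5/3} and torsion τ(t) = det[w'(t), w''(t), w'''(t)]/Δ(t)². Then κ(t) > 0, and the centro-affine curvature and torsion invariants are constant: with κ_s(t) = Δ(t)^{−1/3}·κ'(t), one has κ_s(t)/κ(t)^{3/2} = −4/√3 and τ(t)/κ(t)^{3/2} = 2/√3 for all t > 0. In particular κ_s(t) + 2·τ(t) = 0, so the centro-affine invariant α̂ = (κ_s + 2τ)/κ^{3/2} vanishes identically on the twisted cubic. -/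
/-!
Since `w(λt) = diag(λ, λ², λ³) w(t)`, rescaling the parameter moves the twisted cubic by
centro-affine maps. Hence `Δ`, `κ`, `κ_s` and `τ` are monomials in `t`, and the centro-affine
invariants must be constant. Concretely, `Δ = 2t³` gives `κ = 3 · 2^{-2/3} t⁻⁴`, `κ_s = -6t⁻⁶`,
`τ = 3t⁻⁶` and `κ^{3/2} = (3√3/2) t⁻⁶`.
-/

/-- The twisted cubic `w(t) = (t, t², t³)`. -/
noncomputable def twistedCubic (t : ℝ) : Fin 3 → ℝ := ![t, t ^ 2, t ^ 3]

/-- The centro-equi-affine determinant `Δ = det[w, w', w'']` of the twisted cubic. -/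
noncomputable def twistedDelta (t : ℝ) : ℝ :=
  Matrix.det (Matrix.of
    ![twistedCubic t, deriv twistedCubic t, iteratedDeriv 2 twistedCubic t])

/-- The centro-equi-affine curvature
`κ = −(1/2) D_t²(Δ^{−2/3}) + det[w, w'', w''']/Δ^{5/3}` of the twisted cubic. -/
noncomputable def twistedKappa (t : ℝ) : ℝ :=
  -(1 / 2) * iteratedDeriv 2 (fun s => (twistedDelta s) ^ (-(2 : ℝ) / 3)) t
    + Matrix.det (Matrix.of
        ![twistedCubic t, iteratedDeriv 2 twistedCubic t, iteratedDeriv 3 twistedCubic t]) /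
      (twistedDelta t) ^ ((5 : ℝ) / 3)

/-- The centro-equi-affine torsion `τ = det[w', w'', w''']/Δ²` of the twisted cubic. -/
noncomputable def twistedTau (t : ℝ) : ℝ :=
  Matrix.det (Matrix.of
    ![deriv twistedCubic t, iteratedDeriv 2 twistedCubic t, iteratedDeriv 3 twistedCubic t]) /
    (twistedDelta t) ^ 2

theorem iteratedDeriv_pi_apply {𝕜 ι : Type*} {F : ι → Type*} [NontriviallyNormedField 𝕜]
    [Fintype ι] [∀ i, NormedAddCommGroup (F i)] [∀ i, NormedSpace 𝕜 (F i)]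
    {n : ℕ} {f : 𝕜 → ∀ i, F i} {x : 𝕜} (hf : ContDiffAt 𝕜 n f x) (i : ι) :
    iteratedDeriv n f x i = iteratedDeriv n (fun y => f y i) x := by
  have h := (ContinuousLinearMap.proj (R := 𝕜) (φ := F) i).iteratedFDeriv_comp_left hf le_rfl
  exact (congrArg (fun L => L fun _ => (1 : 𝕜)) h).symm

theorem const_mul_rpow_rpow {c t : ℝ} (hc : 0 ≤ c) (ht : 0 ≤ t) (r p : ℝ) :
    (c * t ^ r) ^ p = c ^ p * t ^ (r * p) := by
  rw [Real.mul_rpow hc (Real.rpow_nonneg ht r), Real.rpow_mul ht]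

theorem deriv_const_mul_rpow (c r t : ℝ) :
    deriv (fun s : ℝ => c * s ^ r) t = c * r * t ^ (r - 1) := by
  rw [deriv_const_mul_field, Real.deriv_rpow_const, mul_assoc]

theorem iteratedDeriv_two_const_mul_rpow (c r t : ℝ) :
    iteratedDeriv 2 (fun s : ℝ => c * s ^ r) t = c * r * (r - 1) * t ^ (r - 2) := by
  have hderiv : deriv (fun s : ℝ => c * s ^ r) = fun s => c * r * s ^ (r - 1) :=
    funext (deriv_const_mul_rpow c r)
  rw [iteratedDeriv_succ, iteratedDeriv_one, hderiv, deriv_const_mul_rpow]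
  ring_nf

theorem twistedCubic_apply (t : ℝ) (i : Fin 3) : twistedCubic t i = t ^ (i + 1 : ℕ) := by
  fin_cases i <;> simp [twistedCubic]

theorem contDiff_twistedCubic {n : WithTop ℕ∞} : ContDiff ℝ n twistedCubic :=
  contDiff_pi.2 fun i => by simpa only [twistedCubic_apply] using contDiff_fun_id.pow (i + 1 : ℕ)

theorem iteratedDeriv_twistedCubic (k : ℕ) (t : ℝ) :
    iteratedDeriv k twistedCubic t =
      fun i : Fin 3 => ((i + 1 : ℕ).descFactorial k : ℝ) * t ^ ((i + 1 : ℕ) - k) := by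
  ext i
  simp only [iteratedDeriv_pi_apply contDiff_twistedCubic.contDiffAt, twistedCubic_apply,
    iteratedDeriv_pow]

theorem deriv_twistedCubic (t : ℝ) : deriv twistedCubic t = ![1, 2 * t, 3 * t ^ 2] := by
  rw [← iteratedDeriv_one, iteratedDeriv_twistedCubic]
  ext i
  fin_cases i <;> norm_num

theorem iteratedDeriv_two_twistedCubic (t : ℝ) :
    iteratedDeriv 2 twistedCubic t = ![0, 2, 6 * t] := by
  rw [iteratedDeriv_twistedCubic]
  ext i
  fin_cases i <;> norm_num [Nat.descFactorial]

theorem iteratedDeriv_three_twistedCubic (t : ℝ) :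
    iteratedDeriv 3 twistedCubic t = ![0, 0, 6] := by
  rw [iteratedDeriv_twistedCubic]
  ext i
  fin_cases i <;> norm_num [Nat.descFactorial]

theorem twistedDelta_eq (t : ℝ) : twistedDelta t = 2 * t ^ 3 := by
  simp only [twistedDelta, twistedCubic, deriv_twistedCubic, iteratedDeriv_two_twistedCubic,
    Matrix.det_fin_three, Matrix.of_apply, Matrix.cons_val]
  ring

theorem det_twistedCubic_deriv_two_deriv_three (t : ℝ) :
    Matrix.det (Matrix.of ![twistedCubic t, iteratedDeriv 2 twistedCubic t,
      iteratedDeriv 3 twistedCubic t]) = 12 * t := by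
  simp only [twistedCubic, iteratedDeriv_two_twistedCubic, iteratedDeriv_three_twistedCubic,
    Matrix.det_fin_three, Matrix.of_apply, Matrix.cons_val]
  ring

theorem det_twistedCubic_deriv_deriv_two_deriv_three (t : ℝ) :
    Matrix.det (Matrix.of ![deriv twistedCubic t, iteratedDeriv 2 twistedCubic t,
      iteratedDeriv 3 twistedCubic t]) = 12 := by
  simp only [deriv_twistedCubic, iteratedDeriv_two_twistedCubic,
    iteratedDeriv_three_twistedCubic, Matrix.det_fin_three, Matrix.of_apply, Matrix.cons_val]
  ring

theorem twistedDelta_rpow {t : ℝ} (ht : 0 ≤ t) (p : ℝ) :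
    twistedDelta t ^ p = 2 ^ p * t ^ (3 * p) := by
  rw [twistedDelta_eq, ← Real.rpow_natCast, const_mul_rpow_rpow zero_le_two ht, Nat.cast_ofNat]

theorem iteratedDeriv_two_twistedDelta_rpow {t : ℝ} (ht : 0 < t) (p : ℝ) :
    iteratedDeriv 2 (fun s => twistedDelta s ^ p) t =
      2 ^ p * (3 * p) * (3 * p - 1) * t ^ (3 * p - 2) := by
  have h : Set.EqOn (fun s => twistedDelta s ^ p) (fun s => 2 ^ p * s ^ (3 * p)) (Set.Ioi 0) :=
    fun s hs => twistedDelta_rpow (Set.mem_Ioi.1 hs).le p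
  rw [h.iteratedDeriv_of_isOpen isOpen_Ioi 2 ht, iteratedDeriv_two_const_mul_rpow]

theorem twistedKappa_eq {t : ℝ} (ht : 0 < t) :
    twistedKappa t = 3 * 2 ^ (-(2 : ℝ) / 3) * t ^ (-4 : ℝ) := by
  have htwo : (2 : ℝ) ^ ((5 : ℝ) / 3) = 2 / 2 ^ (-(2 : ℝ) / 3) := by
    rw [eq_div_iff (by positivity), ← Real.rpow_add two_pos]
    norm_num
  have hpow : t ^ (-4 : ℝ) = t / t ^ (5 : ℝ) := by
    rw [← Real.rpow_one_sub' ht.le (by norm_num)]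
    norm_num
  calc twistedKappa t
      = -(1 / 2) * (2 ^ (-(2 : ℝ) / 3) * 6 * t ^ (-4 : ℝ)) +
          12 * t / (2 ^ ((5 : ℝ) / 3) * t ^ (5 : ℝ)) := by
        rw [twistedKappa, iteratedDeriv_two_twistedDelta_rpow ht,
          det_twistedCubic_deriv_two_deriv_three, twistedDelta_rpow ht.le,
          show 3 * (-(2 : ℝ) / 3) - 2 = -4 by norm_num, show 3 * ((5 : ℝ) / 3) = 5 by norm_num]
        ring
    _ = 3 * 2 ^ (-(2 : ℝ) / 3) * t ^ (-4 : ℝ) := by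
        rw [htwo, hpow]
        field_simp
        norm_num

theorem twistedKappa_pos {t : ℝ} (ht : 0 < t) : 0 < twistedKappa t := by
  rw [twistedKappa_eq ht]
  positivity

theorem deriv_twistedKappa {t : ℝ} (ht : 0 < t) :
    deriv twistedKappa t = -12 * 2 ^ (-(2 : ℝ) / 3) * t ^ (-5 : ℝ) := by
  have h : Set.EqOn twistedKappa (fun s => 3 * 2 ^ (-(2 : ℝ) / 3) * s ^ (-4 : ℝ)) (Set.Ioi 0) :=
    fun _ hs => twistedKappa_eq hs
  rw [h.deriv isOpen_Ioi ht, deriv_const_mul_rpow]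
  ring_nf

theorem twistedDelta_rpow_mul_deriv_twistedKappa {t : ℝ} (ht : 0 < t) :
    twistedDelta t ^ (-(1 : ℝ) / 3) * deriv twistedKappa t = -6 * t ^ (-6 : ℝ) := by
  have htwo : (2 : ℝ) ^ (-(1 : ℝ) / 3) * 2 ^ (-(2 : ℝ) / 3) = 1 / 2 := by
    rw [← Real.rpow_add two_pos]
    norm_num [Real.rpow_neg_one]
  have hpow : t ^ (3 * (-(1 : ℝ) / 3)) * t ^ (-5 : ℝ) = t ^ (-6 : ℝ) := by
    rw [← Real.rpow_add ht]
    norm_num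
  rw [twistedDelta_rpow ht.le, deriv_twistedKappa ht, ← hpow]
  linear_combination -12 * t ^ (3 * (-(1 : ℝ) / 3)) * t ^ (-5 : ℝ) * htwo

theorem twistedTau_eq {t : ℝ} (ht : 0 < t) : twistedTau t = 3 * t ^ (-6 : ℝ) := by
  have hpow : t ^ (-6 : ℝ) = (t ^ 6)⁻¹ := by
    rw [Real.rpow_neg ht.le]
    norm_cast
  rw [twistedTau, det_twistedCubic_deriv_deriv_two_deriv_three, twistedDelta_eq, hpow]
  field_simp
  norm_num

theorem twistedKappa_rpow_three_halves {t : ℝ} (ht : 0 < t) :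
    twistedKappa t ^ ((3 : ℝ) / 2) = 3 * √3 / 2 * t ^ (-6 : ℝ) := by
  have hthree : (3 : ℝ) ^ ((3 : ℝ) / 2) = 3 * √3 := by
    rw [Real.sqrt_eq_rpow, ← Real.rpow_one_add' zero_le_three (by norm_num)]
    norm_num
  rw [twistedKappa_eq ht, const_mul_rpow_rpow (by positivity) ht.le,
    const_mul_rpow_rpow zero_le_three zero_le_two, hthree]
  norm_num [Real.rpow_neg_one, div_eq_mul_inv]

/-- On the twisted cubic (for `t > 0`): `κ > 0`, the centro-affine curvature
`κ_s/κ^{3/2}` (with `κ_s = Δ^{−1/3} κ'`) equals `−4/√3`, the centro-affine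
torsion `τ/κ^{3/2}` equals `2/√3`, and consequently `κ_s + 2τ = 0`, i.e., the
invariant `α̂ = (κ_s + 2τ)/κ^{3/2}` vanishes identically. -/
theorem twisted_cubic_centro_affine_invariants :
    ∀ t : ℝ, 0 < t →
      0 < twistedKappa t ∧
      ((twistedDelta t) ^ (-(1 : ℝ) / 3) * deriv twistedKappa t) /
          (twistedKappa t) ^ ((3 : ℝ) / 2) = -4 / Real.sqrt 3 ∧
      twistedTau t / (twistedKappa t) ^ ((3 : ℝ) / 2) = 2 / Real.sqrt 3 ∧
      (twistedDelta t) ^ (-(1 : ℝ) / 3) * deriv twistedKappa t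
          + 2 * twistedTau t = 0 := by
  intro t ht
  have hpow : t ^ (-6 : ℝ) ≠ 0 := (Real.rpow_pos_of_pos ht _).ne'
  rw [twistedDelta_rpow_mul_deriv_twistedKappa ht, twistedKappa_rpow_three_halves ht,
    twistedTau_eq ht]
  refine ⟨twistedKappa_pos ht, ?_, ?_, ?_⟩
  · rw [mul_div_mul_right _ _ hpow]
    field_simp
    norm_num
  · rw [mul_div_mul_right _ _ hpow]
    field_simp
  · ring
end
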